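/- Let K be a field and p_T = ⟨P_1,…,P_l⟩ a prime ideal of K[T,Y] with p_T ∩ K[T] = {0} and such that Frac(K[T,Y]/p_T) is a separable extension of K(T). Let p̃_T be the ideal generated by P_1,…,P_l in K(T)[Y] and let d be the Krull dimension of K(T)[Y]/p̃_T. Then there exists a Hilbert subset H of K^r such that for every t ∈ H, the specialized ideal p_t = ⟨P_1(t,Y),…,P_l(t,Y)⟩ of K[Y] is prime and K[Y]/p_t is an integral domain of Krull dimension d. -/

import Mathlib

open MvPolynomial

noncomputable section

/-- The rational function field `K(T)` with variables indexed by `ι`,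
realized as the fraction field of the polynomial ring. -/
abbrev RatFuncField (K : Type) [Field K] (ι : Type) : Type := FractionRing (MvPolynomial ι K)

/-- `x ∈ K(T)` can be specialized at `t ∈ K^ι` with value `v`:
there is a representation `x = a/b` with `b(t) ≠ 0` and `v = a(t)/b(t)`. -/
def RatSpecializesTo (K : Type) [Field K] {ι : Type} (t : ι → K)
    (x : RatFuncField K ι) (v : K) : Prop :=
  ∃ a b : MvPolynomial ι K, MvPolynomial.eval t b ≠ 0 ∧
    algebraMap (MvPolynomial ι K) (RatFuncField K ι) b * x
      = algebraMap (MvPolynomial ι K) (RatFuncField K ι) a ∧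
    MvPolynomial.eval t b * v = MvPolynomial.eval t a

/-- `P ∈ K(T)[Y]` specializes at `t` (coefficientwise) to `q ∈ K[Y]`. -/
def PolySpecializesTo (K : Type) [Field K] {ι : Type} {s : ℕ} (t : ι → K)
    (P : MvPolynomial (Fin s) (RatFuncField K ι)) (q : MvPolynomial (Fin s) K) : Prop :=
  ∀ mono : Fin s →₀ ℕ, RatSpecializesTo K t (P.coeff mono) (q.coeff mono)

/-- `H` is a Hilbert subset of `K^ι`: the set of points where finitely many irreducible
polynomials of `K(T)[Y]` specialize to irreducible polynomials of `K[Y]`, intersected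
with a nonempty Zariski-open subset. -/
def IsHilbertSubset (K : Type) [Field K] (ι : Type) (H : Set (ι → K)) : Prop :=
  ∃ (s l n : ℕ) (p : Fin l → MvPolynomial (Fin s) (RatFuncField K ι))
    (g : Fin n → MvPolynomial ι K),
    (∀ i, Irreducible (p i)) ∧
    (∃ t : ι → K, ∃ j, MvPolynomial.eval t (g j) ≠ 0) ∧
    H = {t | (∃ j, MvPolynomial.eval t (g j) ≠ 0) ∧
      ∀ i, ∃ q : MvPolynomial (Fin s) K, PolySpecializesTo K t (p i) q ∧ Irreducible q}

/-- A subset of `K^ι` is Zariski-dense iff for every nonzero polynomial `g` it contains a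
point where `g` does not vanish. -/
def IsZariskiDense (K : Type) [Field K] {ι : Type} (S : Set (ι → K)) : Prop :=
  ∀ g : MvPolynomial ι K, g ≠ 0 → ∃ t ∈ S, MvPolynomial.eval t g ≠ 0

/-- A field is Hilbertian if all its Hilbert subsets (of all `K^r`, `r ≥ 1`) are
Zariski-dense. -/
def IsHilbertianField (K : Type) [Field K] : Prop :=
  ∀ r : ℕ, 0 < r → ∀ H : Set (Fin r → K), IsHilbertSubset K (Fin r) H → IsZariskiDense K H

/-- The canonical ring homomorphism `K[T,Y] → K(T)[Y]`. -/
def extHom (K : Type) [Field K] (r s : ℕ) :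
    MvPolynomial (Fin r ⊕ Fin s) K →+* MvPolynomial (Fin s) (RatFuncField K (Fin r)) :=
  MvPolynomial.eval₂Hom
    ((MvPolynomial.C).comp
      ((algebraMap (MvPolynomial (Fin r) K) (RatFuncField K (Fin r))).comp MvPolynomial.C))
    (Sum.elim
      (fun i => MvPolynomial.C
        (algebraMap (MvPolynomial (Fin r) K) (RatFuncField K (Fin r)) (MvPolynomial.X i)))
      (fun j => MvPolynomial.X j))

/-- The specialization homomorphism `K[T,Y] → K[Y]`, `T ↦ t`. -/
def specHom (K : Type) [Field K] {r s : ℕ} (t : Fin r → K) :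
    MvPolynomial (Fin r ⊕ Fin s) K →+* MvPolynomial (Fin s) K :=
  MvPolynomial.eval₂Hom MvPolynomial.C
    (Sum.elim (fun i => MvPolynomial.C (t i)) (fun j => MvPolynomial.X j))

/-- `L` is a separable extension of `F` in the general sense (equivalently, `L` is
linearly disjoint from the perfect closure of `F`, equivalently `L ⊗_F F̄` is reduced);
the extension is given by the ring homomorphism `f : F → L`. -/
def IsSepExtOfHom (F L : Type) [Field F] [CommRing L] (f : F →+* L) : Prop :=
  letI : Algebra F L := f.toAlgebra
  IsReduced (TensorProduct F (AlgebraicClosure F) L)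

/-- `Frac(A)` is a separable extension of `F` in the general sense. -/
def IsSepOverBase (F : Type) [Field F] (A : Type) [CommRing A] [Algebra F A] : Prop :=
  IsSepExtOfHom F (FractionRing A) ((algebraMap A (FractionRing A)).comp (algebraMap F A))

/-- The height of an ideal: the infimum over primes containing it of the lengths of
chains of primes below.  For a prime ideal this is the usual height. -/
def idealHeight {R : Type} [CommRing R] (I : Ideal R) : ℕ∞ :=
  ⨅ p : {q : PrimeSpectrum R // I ≤ q.asIdeal}, Order.height p.1

/-- The monomials in `s` variables of total degree at most `D`. -/
def MonLE (s D : ℕ) : Type := {m : Fin s →₀ ℕ // m.degree ≤ D}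

noncomputable instance (s D : ℕ) : Fintype (MonLE s D) :=
  (Finsupp.finite_of_degree_le D).fintype

/-- The generic polynomial of degree `D`, with parameter variables `v m`, `m` a monomial of
degree at most `D`, as an element of `K[Λ][Y]`. -/
def genPoly (K : Type) [Field K] (s D : ℕ) {Λ : Type} (v : MonLE s D → Λ) :
    MvPolynomial (Fin s) (MvPolynomial Λ K) :=
  ∑ m : MonLE s D, MvPolynomial.monomial m.1 (MvPolynomial.X (v m))

/-- The generic polynomial of degree `D` specialized at `lam ∈ K^{N_D}`. -/
def genPolyAt (K : Type) [Field K] (s D : ℕ) (lam : MonLE s D → K) :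
    MvPolynomial (Fin s) K :=
  ∑ m : MonLE s D, MvPolynomial.monomial m.1 (lam m)

/-- Substitution `T_i ↦ U_i(Y)` as a ring homomorphism `K[T,Y] → K[Y]`. -/
def polySubstHom (K : Type) [Field K] {r s : ℕ} (U : Fin r → MvPolynomial (Fin s) K) :
    MvPolynomial (Fin r ⊕ Fin s) K →+* MvPolynomial (Fin s) K :=
  MvPolynomial.eval₂Hom MvPolynomial.C (Sum.elim U (fun j => MvPolynomial.X j))

/-- The quasi-generic polynomial `Q_{S,R}(Λ,Y) = ∑_i Λ_i Q_i(Y) + R(Y)` of base `(S,R)`,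
where `S = {monomial (m 0), …, monomial (m n)}`, as an element of `K[Λ][Y]`. -/
def quasiGen (K : Type) [Field K] {s n : ℕ} (m : Fin (n + 1) → (Fin s →₀ ℕ))
    (R : MvPolynomial (Fin s) K) :
    MvPolynomial (Fin s) (MvPolynomial (Fin (n + 1)) K) :=
  (∑ i, MvPolynomial.monomial (m i) (MvPolynomial.X i)) +
    MvPolynomial.map (MvPolynomial.C) R

/-- Hypothesis (H) for the triple `(p, S, R)` (with `S` the set of monomials
`monomial (m i)`, `m 0 = 0`): the map `φ_{S,R}` sending `(a_1,…,a_n)` to the class mod `E`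
of `∑_{i ≥ 1} a_i Q_i(Y) + R(Y)` in `B/E` is not identically zero, where `B = K[Y]/p` and
`E ⊆ B` is the subfield of elements algebraic over `K`. -/
def HypothesisH (K : Type) [Field K] {s n : ℕ} (p : Ideal (MvPolynomial (Fin s) K))
    (m : Fin (n + 1) → (Fin s →₀ ℕ)) (R : MvPolynomial (Fin s) K) : Prop :=
  ∃ a : Fin (n + 1) → K,
    Ideal.Quotient.mk p ((∑ i ∈ Finset.univ.erase 0, MvPolynomial.monomial (m i) (a i)) + R)
      ∉ integralClosure K (MvPolynomial (Fin s) K ⧸ p)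

open scoped TensorProduct

/-!
View `K[T, Y]` as `R[Y]` with `R = K[T]`, let `F = K(T)`, and let `L` be the fraction field of
`F[Y] ⧸ p̃_T`. Since `L` is separable over `F`, it is generated by algebraically independent
elements `x_1, …, x_d` and one further element `θ`, which after rescaling is integral over `R[x]`.
As `R[x]` is integrally closed, the ideal of relations among `θ, x_1, …, x_d` over `R` is generated
by the minimal polynomial `f` of `θ` over `R[x]`.

The finitely generated algebras `R[Y] ⧸ p_T` and `R[x][θ]` have the same fraction field, so each of
them shares a principal localization with their compositum in `L`. By generic freeness of the
quotient by the inverted element, that element stays a nonzerodivisor on the fibres over all points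
outside a hypersurface `g = 0`. Hence over such a point `t` the two fibres are integral
simultaneously and then have the same dimension. The fibre of `R[x][θ]` at `t` is
`K[θ, x] ⧸ (f_t)`; since `f_t` is still monic in `θ`, it is integral of dimension `d` as soon as
`f_t` is irreducible.
-/

section KrullDimension

theorem ringKrullDim_eq_of_isIntegral {R A : Type*} [CommRing R] [CommRing A] [Algebra R A]
    [Algebra.IsIntegral R A] (hinj : Function.Injective (algebraMap R A)) :
    ringKrullDim A = ringKrullDim R := by
  apply le_antisymm
  · refine Order.krullDim_le_of_strictMono (PrimeSpectrum.comap (algebraMap R A)) fun p q hpq ↦ ?_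
    have := p.2
    exact Ideal.IsIntegral.comap_lt_comap (R := R) (I := p.asIdeal) (J := q.asIdeal) hpq
  · refine iSup_le fun chain ↦ ?_
    have hbot : (⊥ : Ideal A).comap (algebraMap R A) ≤ chain.head.asIdeal := by
      rw [← RingHom.ker_eq_comap_bot, (RingHom.injective_iff_ker_eq_bot _).1 hinj]
      exact bot_le
    have := chain.head.2
    obtain ⟨P, -, hP, hPover⟩ := Ideal.exists_ideal_over_prime_of_isIntegral _ ⊥ hbot
    have : P.LiesOver chain.head.asIdeal := ⟨hPover.symm⟩
    obtain ⟨chain', hlength, -⟩ := Ideal.exists_ltSeries_of_hasGoingUp (S := A) chain P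
    exact hlength ▸ Order.LTSeries.length_le_krullDim chain'

theorem exists_ringKrullDim_eq_and_trdeg_eq (k A : Type*) [Field k] [CommRing A] [IsDomain A]
    [Algebra k A] [Algebra.FiniteType k A] :
    ∃ n : ℕ, ringKrullDim A = n ∧ Algebra.trdeg k A = n := by
  obtain ⟨n, g, hg, hInt⟩ := exists_integral_inj_algHom_of_fg k A
  algebraize [g.toRingHom]
  have : IsScalarTower k (MvPolynomial (Fin n) k) A := .of_algebraMap_eq fun x ↦ (g.commutes x).symm
  have : FaithfulSMul (MvPolynomial (Fin n) k) A := (faithfulSMul_iff_algebraMap_injective _ _).2 hg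
  refine ⟨n, ?_, ?_⟩
  · rw [ringKrullDim_eq_of_isIntegral hg, MvPolynomial.ringKrullDim_of_isNoetherianRing,
      ringKrullDim_eq_zero_of_field, zero_add, Nat.card_fin]
  · have htr := lift_trdeg_add_eq k (MvPolynomial (Fin n) k) A
    rw [trdeg_eq_zero (R := MvPolynomial (Fin n) k), MvPolynomial.trdeg_of_isDomain] at htr
    simpa using htr.symm

theorem ringKrullDim_eq_of_isAlgebraic (k : Type*) {A B : Type*} [Field k] [CommRing A]
    [IsDomain A] [CommRing B] [IsDomain B] [Algebra k A] [Algebra k B] [Algebra A B]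
    [IsScalarTower k A B] [FaithfulSMul A B] [Algebra.FiniteType k A] [Algebra.FiniteType k B]
    [Algebra.IsAlgebraic A B] : ringKrullDim A = ringKrullDim B := by
  obtain ⟨m, hdimA, htrA⟩ := exists_ringKrullDim_eq_and_trdeg_eq k A
  obtain ⟨n, hdimB, htrB⟩ := exists_ringKrullDim_eq_and_trdeg_eq k B
  have htr := lift_trdeg_add_eq k A B
  rw [trdeg_eq_zero (R := A), Cardinal.lift_zero, add_zero, htrA, htrB, Cardinal.lift_natCast,
    Cardinal.lift_natCast, Nat.cast_inj] at htr
  rw [hdimA, hdimB, htr]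

end KrullDimension

section GenericFreeness

theorem exists_finset_subset_forall_exists_le {α : Type*} [PartialOrder α] [WellQuasiOrderedLE α]
    (S : Set α) : ∃ M : Finset α, ↑M ⊆ S ∧ ∀ x ∈ S, ∃ y ∈ M, y ≤ x := by
  have hfin : {x | Minimal (· ∈ S) x}.Finite :=
    WellQuasiOrderedLE.finite_of_isAntichain (setOfPred_minimal_antichain _)
  refine ⟨hfin.toFinset, fun x hx ↦ (hfin.mem_toFinset.1 hx).1, fun x hx ↦ ?_⟩
  obtain ⟨y, hyx, hy⟩ := exists_minimal_le_of_wellFoundedLT (· ∈ S) x hx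
  exact ⟨y, hfin.mem_toFinset.2 hy, hyx⟩

variable {σ R : Type*} [CommRing R]

-- The monomials divisible by no leading monomial of `B` are a basis of the quotient.
theorem free_quotient_of_isUnit_leadingCoeff (o : MonomialOrder σ) {J : Ideal (MvPolynomial σ R)}
    {B : Set (MvPolynomial σ R)} (hBJ : B ⊆ J) (hunit : ∀ b ∈ B, IsUnit (o.leadingCoeff b))
    (hdeg : ∀ f ∈ J, f ≠ 0 → ∃ b ∈ B, o.degree b ≤ o.degree f) :
    Module.Free R (MvPolynomial σ R ⧸ J) := by
  let S : Set (σ →₀ ℕ) := {m | ∀ b ∈ B, ¬ o.degree b ≤ m}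
  let φ := (Ideal.Quotient.mkₐ R J).toLinearMap.domRestrict (restrictSupport R S)
  have hinj : Function.Injective φ := by
    rw [injective_iff_map_eq_zero]
    rintro ⟨f, hf⟩ hφ
    by_contra hne
    have hf0 : f ≠ 0 := fun h ↦ hne (Subtype.ext h)
    obtain ⟨b, hb, hle⟩ := hdeg f (Ideal.Quotient.eq_zero_iff_mem.1 hφ) hf0
    exact (mem_restrictSupport_iff R).1 hf (o.degree_mem_support hf0) b hb hle
  have hsurj : Function.Surjective φ := by
    rintro ⟨f⟩
    obtain ⟨q, r, rfl, -, hr⟩ := o.div_set hunit f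
    have hq : Finsupp.linearCombination (MvPolynomial σ R) (fun b : B ↦ b.1) q ∈ J :=
      J.sum_mem fun b _ ↦ J.mul_mem_left _ (hBJ b.2)
    refine ⟨⟨r, (mem_restrictSupport_iff R).2 hr⟩, ?_⟩
    exact (Ideal.Quotient.mk_eq_mk_iff_sub_mem _ _).2 (by simpa using hq)
  have := Module.Free.of_basis (basisRestrictSupport R S)
  exact .of_equiv (.ofBijective φ ⟨hinj, hsurj⟩)

theorem degree_map_of_injective (o : MonomialOrder σ) {S : Type*} [CommRing S] {f : R →+* S}
    (hf : Function.Injective f) (p : MvPolynomial σ R) :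
    o.degree (map f p) = o.degree p := by
  simp only [MonomialOrder.degree, support_map_of_injective p hf]

attribute [local instance] MvPolynomial.algebraMvPolynomial in
theorem exists_mem_degree_eq_of_mem_map (o : MonomialOrder σ)
    {M : Submonoid R} (hM : M ≤ nonZeroDivisors R) (S : Type*) [CommRing S] [Algebra R S]
    [IsLocalization M S] {J : Ideal (MvPolynomial σ R)} {f : MvPolynomial σ S}
    (hf : f ∈ J.map (map (algebraMap R S))) (hf0 : f ≠ 0) :
    ∃ p ∈ J, p ≠ 0 ∧ o.degree p = o.degree f := by
  have hinj := IsLocalization.injective S hM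
  obtain ⟨⟨⟨p, hp⟩, _, g, hg, rfl⟩, hpf⟩ :=
    (IsLocalization.mem_map_algebraMap_iff (M.map (C (σ := σ))) (MvPolynomial σ S)).1 hf
  have hu : IsUnit (algebraMap R S g) := IsLocalization.map_units S ⟨g, hg⟩
  have hsmul : algebraMap R S g • f = map (algebraMap R S) p := by
    rw [smul_eq_C_mul, mul_comm, ← map_C]
    exact hpf
  have hdeg := o.degree_smul_of_isRegular hu.isRegular (f := f)
  rw [hsmul, degree_map_of_injective o hinj] at hdeg
  refine ⟨p, hp, ?_, hdeg⟩
  rintro rfl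
  rw [map_zero, hu.smul_eq_zero] at hsmul
  exact hf0 hsmul

theorem map_algebraTensorAlgEquiv_map_includeRight (S : Type*) [CommRing S] [Algebra R S]
    (J : Ideal (MvPolynomial σ R)) :
    Ideal.map (algebraTensorAlgEquiv R S (σ := σ) : _ →+* _)
      (J.map (Algebra.TensorProduct.includeRight : _ →ₐ[R] S ⊗[R] MvPolynomial σ R)) =
      J.map (map (algebraMap R S)) := by
  have hcomp : (algebraTensorAlgEquiv R S (σ := σ) : _ →+* _).comp
      (Algebra.TensorProduct.includeRight : _ →ₐ[R] S ⊗[R] MvPolynomial σ R).toRingHom =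
      map (algebraMap R S) := by
    ext <;> simp [algebraTensorAlgEquiv_tmul]
  rw [← hcomp]
  exact Ideal.map_map _ _

/-- A presentation `A = R[σ] / I` base changes to the presentation
`S ⊗[R] A = S[σ] / (I · S[σ])`. -/
def tensorEquivQuotientMapKer (S : Type*) [CommRing S] [Algebra R S] {A : Type*} [CommRing A]
    [Algebra R A] {φ : MvPolynomial σ R →ₐ[R] A} (hφ : Function.Surjective φ) :
    S ⊗[R] A ≃ₐ[S] MvPolynomial σ S ⧸ (RingHom.ker φ).map (map (algebraMap R S)) :=
  (Algebra.TensorProduct.congr .refl (Ideal.quotientKerAlgEquivOfSurjective hφ).symm).trans <|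
    (Algebra.TensorProduct.tensorQuotientEquiv S _ S _).trans <|
      Ideal.quotientEquivAlg _ _ (algebraTensorAlgEquiv R S)
        (map_algebraTensorAlgEquiv_map_includeRight S _).symm

theorem exists_free_localizationAway_tensorProduct [IsDomain R] (A : Type*) [CommRing A]
    [Algebra R A] [Algebra.FiniteType R A] :
    ∃ g : R, g ≠ 0 ∧ Module.Free (Localization.Away g) (Localization.Away g ⊗[R] A) := by
  obtain ⟨n, φ, hφ⟩ := Algebra.FiniteType.iff_quotient_mvPolynomial''.1 ‹_›
  let o : MonomialOrder (Fin n) := .lex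
  obtain ⟨M, hM, hmin⟩ := exists_finset_subset_forall_exists_le
    {m | ∃ p ∈ RingHom.ker φ, p ≠ 0 ∧ o.degree p = m}
  choose! b hb hb0 hbdeg using fun m (hm : m ∈ M) ↦ hM hm
  let g := ∏ m ∈ M, o.leadingCoeff (b m)
  have hg0 : g ≠ 0 := Finset.prod_ne_zero_iff.2 fun m hm ↦ o.leadingCoeff_ne_zero_iff.2 (hb0 m hm)
  have hpow := powers_le_nonZeroDivisors_of_noZeroDivisors hg0
  let Rg := Localization.Away g
  have hinj : Function.Injective (algebraMap R Rg) := IsLocalization.injective Rg hpow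
  let B : Set (MvPolynomial (Fin n) Rg) := (fun m ↦ map (algebraMap R Rg) (b m)) '' M
  have hBmem : B ⊆ (RingHom.ker φ).map (map (algebraMap R Rg)) := by
    rintro _ ⟨m, hm, rfl⟩
    exact Ideal.mem_map_of_mem _ (hb m hm)
  have hBunit : ∀ p ∈ B, IsUnit (o.leadingCoeff p) := by
    rintro _ ⟨m, hm, rfl⟩
    rw [MonomialOrder.leadingCoeff, degree_map_of_injective o hinj, coeff_map]
    have hdvd : o.leadingCoeff (b m) ∣ g := Finset.dvd_prod_of_mem _ hm
    exact isUnit_of_dvd_unit (map_dvd _ hdvd) (IsLocalization.Away.algebraMap_isUnit g)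
  have hBdeg : ∀ f ∈ (RingHom.ker φ).map (map (algebraMap R Rg)), f ≠ 0 →
      ∃ p ∈ B, o.degree p ≤ o.degree f := by
    intro f hf hf0
    obtain ⟨p, hp, hp0, hpf⟩ := exists_mem_degree_eq_of_mem_map o hpow Rg hf hf0
    obtain ⟨m, hm, hle⟩ := hmin _ ⟨p, hp, hp0, hpf⟩
    refine ⟨_, ⟨m, hm, rfl⟩, ?_⟩
    rwa [degree_map_of_injective o hinj, hbdeg m hm]
  have := free_quotient_of_isUnit_leadingCoeff o hBmem hBunit hBdeg
  exact ⟨g, hg0, .of_equiv (tensorEquivQuotientMapKer Rg hφ).symm.toLinearEquiv⟩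

end GenericFreeness

section GenericRegularity

variable {R : Type*} [CommRing R]

theorem lTensor_injective_of_flat_tensorProduct (R' : Type*) [CommRing R'] [Algebra R R']
    [Module.Flat R R'] (S : Type*) [CommRing S] [Algebra R S] [Algebra R' S] [IsScalarTower R R' S]
    {M N P : Type*} [AddCommGroup M] [AddCommGroup N] [AddCommGroup P] [Module R M] [Module R N]
    [Module R P] [Module.Flat R' (R' ⊗[R] P)] {f : N →ₗ[R] P} (hf : Function.Surjective f)
    {g : M →ₗ[R] N} (hg : Function.Injective g) (hgf : Function.Exact g f) :
    Function.Injective (g.lTensor S) := by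
  have hbase : Function.Injective ((g.baseChange R').lTensor S) :=
    LinearMap.lTensor_injective_of_exact_of_flat (f.baseChange R')
      (LinearMap.lTensor_surjective _ hf) _ (Module.Flat.lTensor_preserves_injective_linearMap g hg)
      (lTensor_exact R' hgf hf) S
  let eM := TensorProduct.AlgebraTensorModule.cancelBaseChange R R' R' S M
  let eN := TensorProduct.AlgebraTensorModule.cancelBaseChange R R' R' S N
  have hcomm (x) : (g.lTensor S ∘ eM) x = eN ((g.baseChange R').lTensor S x) :=
    LinearMap.congr_fun
      (TensorProduct.AlgebraTensorModule.lTensor_comp_cancelBaseChange R R' R' g) x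
  rw [← EquivLike.injective_comp eM, funext hcomm]
  exact eN.injective.comp hbase

theorem exists_tmul_mem_nonZeroDivisors [IsDomain R] {A : Type*} [CommRing A] [IsDomain A]
    [Algebra R A] [Algebra.FiniteType R A] {w : A} (hw : w ≠ 0) :
    ∃ g : R, g ≠ 0 ∧ ∀ (S : Type*) [CommRing S] [Algebra R S], IsUnit (algebraMap R S g) →
      (1 : S) ⊗ₜ[R] w ∈ nonZeroDivisors (S ⊗[R] A) := by
  obtain ⟨g, hg0, hfree⟩ := exists_free_localizationAway_tensorProduct (R := R) (A ⧸ Ideal.span {w})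
  refine ⟨g, hg0, fun S _ _ hg ↦ ?_⟩
  let := (IsLocalization.Away.lift (S := Localization.Away g) g hg).toAlgebra
  have : IsScalarTower R (Localization.Away g) S :=
    .of_algebraMap_eq fun x ↦ (IsLocalization.Away.lift_eq g hg x).symm
  have hinj : Function.Injective (LinearMap.mulLeft R w) := fun x y ↦ mul_left_cancel₀ hw
  have hexact : Function.Exact (LinearMap.mulLeft R w)
      (Ideal.Quotient.mkₐ R (Ideal.span {w})).toLinearMap := by
    intro x
    rw [AlgHom.toLinearMap_apply, Ideal.Quotient.mkₐ_eq_mk, Ideal.Quotient.eq_zero_iff_mem,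
      Ideal.mem_span_singleton']
    exact exists_congr fun y ↦ by rw [LinearMap.mulLeft_apply, mul_comm]
  have h := lTensor_injective_of_flat_tensorProduct (Localization.Away g) S
    (Ideal.Quotient.mkₐ_surjective R (Ideal.span {w})) hinj hexact
  have hmul : (LinearMap.mulLeft R w).lTensor S = LinearMap.mulLeft R ((1 : S) ⊗ₜ[R] w) := by
    ext; simp
  rw [hmul] at h
  exact mem_nonZeroDivisors_iff_left.2 fun x hx ↦ h (hx.trans (mul_zero _).symm)

end GenericRegularity

section GenericFibers

theorem isDomain_iff_of_isLocalizationAway {X Y : Type*} [CommRing X] [CommRing Y] [Algebra X Y]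
    {u : X} (hu : u ∈ nonZeroDivisors X) [IsLocalization.Away u Y] : IsDomain X ↔ IsDomain Y := by
  have hpow : Submonoid.powers u ≤ nonZeroDivisors X := Submonoid.powers_le.2 hu
  exact ⟨fun _ ↦ IsLocalization.isDomain_of_le_nonZeroDivisors Y hpow,
    fun _ ↦ (IsLocalization.injective Y hpow).isDomain⟩

theorem ringKrullDim_eq_of_isLocalizationAway (k : Type*) {X Y : Type*} [Field k] [CommRing X]
    [IsDomain X] [CommRing Y] [Algebra k X] [Algebra k Y] [Algebra X Y] [IsScalarTower k X Y]
    [Algebra.FiniteType k X] {u : X} (hu : u ≠ 0) [IsLocalization.Away u Y] :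
    ringKrullDim X = ringKrullDim Y := by
  have hpow := powers_le_nonZeroDivisors_of_noZeroDivisors hu
  have : IsDomain Y := IsLocalization.isDomain_of_le_nonZeroDivisors Y hpow
  have : FaithfulSMul X Y :=
    (faithfulSMul_iff_algebraMap_injective X Y).2 (IsLocalization.injective Y hpow)
  have : Algebra.FiniteType X Y := IsLocalization.finiteType_of_monoid_fg (.powers u) Y
  have : Algebra.FiniteType k Y := .trans ‹_› this
  have : Algebra.IsAlgebraic X Y := IsLocalization.isAlgebraic Y (.powers u)
  exact ringKrullDim_eq_of_isAlgebraic k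

universe u

/-- Over a nonempty open subset of `Spec R`, the fibres of the `R`-algebras `A` and `B` are
integral at the same points, and then have the same Krull dimension. The open set is a principal
one `g ≠ 0`, and a point of it is a homomorphism from `R` to a field in the universe of `R`. -/
def GenericFibersAgree (R : Type u) [CommRing R] (A B : Type*) [CommRing A] [CommRing B]
    [Algebra R A] [Algebra R B] : Prop :=
  ∃ g : R, g ≠ 0 ∧ ∀ (K : Type u) [Field K] [Algebra R K], algebraMap R K g ≠ 0 →
    (IsDomain (K ⊗[R] A) ↔ IsDomain (K ⊗[R] B)) ∧
      (IsDomain (K ⊗[R] A) → ringKrullDim (K ⊗[R] A) = ringKrullDim (K ⊗[R] B))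

namespace GenericFibersAgree

variable {R : Type u} [CommRing R] {A B C : Type*} [CommRing A] [CommRing B] [CommRing C]
  [Algebra R A] [Algebra R B] [Algebra R C]

theorem symm (h : GenericFibersAgree R A B) : GenericFibersAgree R B A := by
  obtain ⟨g, hg, h⟩ := h
  refine ⟨g, hg, fun K _ _ hgK ↦ ?_⟩
  obtain ⟨hiff, hdim⟩ := h K hgK
  exact ⟨hiff.symm, fun hB ↦ (hdim (hiff.2 hB)).symm⟩

theorem trans [IsDomain R] (hAB : GenericFibersAgree R A B) (hBC : GenericFibersAgree R B C) :
    GenericFibersAgree R A C := by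
  obtain ⟨g, hg, hAB⟩ := hAB
  obtain ⟨h, hh, hBC⟩ := hBC
  refine ⟨g * h, mul_ne_zero hg hh, fun K _ _ hK ↦ ?_⟩
  rw [map_mul, mul_ne_zero_iff] at hK
  obtain ⟨hiff, hdim⟩ := hAB K hK.1
  obtain ⟨hiff', hdim'⟩ := hBC K hK.2
  exact ⟨hiff.trans hiff', fun hA ↦ (hdim hA).trans (hdim' (hiff.1 hA))⟩

theorem of_isLocalizationAway [IsDomain R] [IsDomain A] [Algebra.FiniteType R A] [Algebra A B]
    [IsScalarTower R A B] {w : A} (hw : w ≠ 0) [IsLocalization.Away w B] :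
    GenericFibersAgree R A B := by
  obtain ⟨g, hg, hreg⟩ := exists_tmul_mem_nonZeroDivisors (R := R) hw
  refine ⟨g, hg, fun K _ _ hgK ↦ ?_⟩
  have hwK := hreg K (isUnit_iff_ne_zero.2 hgK)
  let e := IsLocalization.Away.tensorProductEquivTMulRight R K w B
  refine ⟨(isDomain_iff_of_isLocalizationAway hwK (Y := Localization.Away _)).trans
    e.toMulEquiv.isDomain_iff.symm, fun _ ↦ ?_⟩
  rw [ringKrullDim_eq_of_ringEquiv e.toRingEquiv]
  exact ringKrullDim_eq_of_isLocalizationAway K (nonZeroDivisors.ne_zero hwK)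

end GenericFibersAgree

end GenericFibers

section Birational

universe u

theorem exists_forall_exists_pow_mul_eq_algebraMap (A C L : Type*) [CommRing A] [CommRing C]
    [Field L] [Algebra A C] [Algebra A L] [Algebra C L] [IsScalarTower A C L] [IsFractionRing A L]
    [FaithfulSMul C L] [Algebra.FiniteType A C] :
    ∃ w : A, w ≠ 0 ∧ ∀ c : C, ∃ (n : ℕ) (a : A), algebraMap A C w ^ n * c = algebraMap A C a := by
  obtain ⟨s, hs⟩ := ‹Algebra.FiniteType A C›.out
  obtain ⟨⟨w, hw⟩, hInt⟩ :=
    IsLocalization.exist_integer_multiples (nonZeroDivisors A) s (algebraMap C L)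
  have := (algebraMap A L).domain_nontrivial
  refine ⟨w, nonZeroDivisors.ne_zero hw, fun c ↦ ?_⟩
  have hc : c ∈ Algebra.adjoin A (s : Set C) := hs ▸ Algebra.mem_top
  induction hc using Algebra.adjoin_induction with
  | mem c hc =>
    obtain ⟨a, ha⟩ := hInt c hc
    refine ⟨1, a, FaithfulSMul.algebraMap_injective C L ?_⟩
    rw [pow_one, map_mul, ← IsScalarTower.algebraMap_apply, ← IsScalarTower.algebraMap_apply, ha,
      Algebra.smul_def]
  | algebraMap a => exact ⟨0, a, by rw [pow_zero, one_mul]⟩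
  | add c c' _ _ hc hc' =>
    obtain ⟨m, a, ha⟩ := hc
    obtain ⟨n, a', ha'⟩ := hc'
    refine ⟨m + n, w ^ n * a + w ^ m * a', ?_⟩
    simp only [map_add, map_mul, map_pow, ← ha, ← ha']
    ring
  | mul c c' _ _ hc hc' =>
    obtain ⟨m, a, ha⟩ := hc
    obtain ⟨n, a', ha'⟩ := hc'
    refine ⟨m + n, a * a', ?_⟩
    simp only [map_mul, ← ha, ← ha']
    ring

theorem isLocalizationAway_of_forall_exists_pow_mul_eq {A C T : Type*} [CommRing A] [CommRing C]
    [CommRing T] [Algebra A C] [Algebra A T] [Algebra C T] [IsScalarTower A C T]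
    [FaithfulSMul A C] (w : A) [IsLocalization.Away (algebraMap A C w) T]
    (h : ∀ c : C, ∃ (n : ℕ) (a : A), algebraMap A C w ^ n * c = algebraMap A C a) :
    IsLocalization.Away w T := by
  have hw : IsUnit (algebraMap A T w) := by
    rw [IsScalarTower.algebraMap_apply A C T]
    exact IsLocalization.Away.algebraMap_isUnit _
  refine .mk _ hw (fun t ↦ ?_) fun a b hab ↦ ?_
  · obtain ⟨m, c, hc⟩ := IsLocalization.Away.surj (algebraMap A C w) t
    obtain ⟨n, a, ha⟩ := h c
    refine ⟨m + n, a, ?_⟩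
    rw [IsScalarTower.algebraMap_apply A C T, IsScalarTower.algebraMap_apply A C T, ← ha, map_mul,
      map_pow, ← hc]
    ring
  · rw [IsScalarTower.algebraMap_apply A C T, IsScalarTower.algebraMap_apply A C T] at hab
    obtain ⟨n, hn⟩ := IsLocalization.Away.exists_of_eq (algebraMap A C w) hab
    refine ⟨n, FaithfulSMul.algebraMap_injective A C ?_⟩
    simpa only [map_mul, map_pow] using hn

namespace GenericFibersAgree

theorem of_isFractionRing {R : Type u} [CommRing R] [IsDomain R] (A C L : Type*) [CommRing A]
    [CommRing C] [IsDomain A] [IsDomain C] [Algebra R A] [Algebra R C] [Algebra A C]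
    [IsScalarTower R A C] [Algebra.FiniteType R A] [Algebra.FiniteType R C] [Field L] [Algebra A L]
    [Algebra C L] [IsScalarTower A C L] [IsFractionRing A L] [FaithfulSMul C L] :
    GenericFibersAgree R A C := by
  have : Algebra.FiniteType A C := .of_restrictScalars_finiteType R A C
  obtain ⟨w, hw, h⟩ := exists_forall_exists_pow_mul_eq_algebraMap A C L
  have : FaithfulSMul A C := .tower_bot A C L
  let T := Localization.Away (algebraMap A C w)
  have : IsLocalization.Away w T := isLocalizationAway_of_forall_exists_pow_mul_eq (C := C) w h
  have hw' : algebraMap A C w ≠ 0 := by simpa using hw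
  exact (of_isLocalizationAway (B := T) hw).trans (of_isLocalizationAway (B := T) hw').symm

theorem of_subalgebra {R : Type u} [CommRing R] [IsDomain R] {L : Type*} [Field L] [Algebra R L]
    {A B : Subalgebra R L} (hA : A.FG) (hB : B.FG) [IsFractionRing A L] [IsFractionRing B L] :
    GenericFibersAgree R A B := by
  have := A.fg_iff_finiteType.1 hA
  have := B.fg_iff_finiteType.1 hB
  have := (A ⊔ B).fg_iff_finiteType.1 (hA.sup hB)
  algebraize [(Subalgebra.inclusion (le_sup_left : A ≤ A ⊔ B)).toRingHom,
    (Subalgebra.inclusion (le_sup_right : B ≤ A ⊔ B)).toRingHom]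
  have : IsScalarTower R A ↥(A ⊔ B) := .of_algebraMap_eq fun _ ↦ rfl
  have : IsScalarTower R B ↥(A ⊔ B) := .of_algebraMap_eq fun _ ↦ rfl
  have : IsScalarTower A ↥(A ⊔ B) L := .of_algebraMap_eq fun _ ↦ rfl
  have : IsScalarTower B ↥(A ⊔ B) L := .of_algebraMap_eq fun _ ↦ rfl
  exact (of_isFractionRing A ↥(A ⊔ B) L).trans (of_isFractionRing B ↥(A ⊔ B) L).symm

end GenericFibersAgree

theorem isFractionRing_adjoin (R : Type*) {F L : Type*} [CommRing R] [Field F] [Field L]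
    [Algebra R F] [IsFractionRing R F] [Algebra R L] [Algebra F L] [IsScalarTower R F L] {S : Set L}
    (hS : IntermediateField.adjoin F S = ⊤) : IsFractionRing (Algebra.adjoin R S) L := by
  let A := Algebra.adjoin R S
  have hF : Set.range (algebraMap F L) ⊆ Subfield.closure (A : Set L) := by
    rintro _ ⟨z, rfl⟩
    obtain ⟨x, y, -, rfl⟩ := IsFractionRing.div_surjective R z
    rw [map_div₀, ← IsScalarTower.algebraMap_apply, ← IsScalarTower.algebraMap_apply]
    exact div_mem (Subfield.subset_closure (A.algebraMap_mem x))
      (Subfield.subset_closure (A.algebraMap_mem y))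
  have htop : Subfield.closure (A : Set L) = ⊤ := by
    rw [eq_top_iff, ← IntermediateField.top_toSubfield (F := F), ← hS]
    exact Subfield.closure_le.2
      (Set.union_subset hF (Algebra.subset_adjoin.trans Subfield.subset_closure))
  refine .of_field _ _ fun z ↦ ?_
  obtain ⟨a, ha, b, hb, hab⟩ := Subfield.mem_closure_iff.1 (htop ▸ Subfield.mem_top z)
  have hA : Subring.closure (A : Set L) = A.toSubring := Subring.closure_eq A.toSubring
  rw [hA] at ha hb
  exact ⟨⟨a, ha⟩, ⟨b, hb⟩, hab.symm⟩

end Birational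

section SeparableGeneration

variable {F L : Type*} [Field F] [Field L] [Algebra F L]

theorem linearIndepOn_pow_of_isReduced_tensorProduct (E : Type*) [CommRing E] [Nontrivial E]
    [Algebra F E] (p : ℕ) [Fact p.Prime] [CharP E p] [PerfectRing E p] [IsReduced (E ⊗[F] L)]
    {s : Finset L} (hs : LinearIndepOn F id (s : Set L)) :
    LinearIndepOn F (fun z : L ↦ z ^ p) (s : Set L) := by
  have : CharP (E ⊗[F] L) p :=
    charP_of_injective_algebraMap (FaithfulSMul.algebraMap_injective E (E ⊗[F] L)) p
  have hsE : LinearIndepOn E (fun z : L ↦ (1 : E) ⊗ₜ[F] z) (s : Set L) :=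
    Module.Flat.linearIndependent_one_tmul (S := E) hs
  rw [linearIndepOn_finset_iff] at hsE ⊢
  intro c hc z hz
  choose e he using fun i ↦ surjective_frobenius E p (algebraMap F E (c i))
  have hpow : (∑ z ∈ s, e z • (1 : E) ⊗ₜ[F] z) ^ p = 0 := by
    calc (∑ z ∈ s, e z • (1 : E) ⊗ₜ[F] z) ^ p
        = ∑ z ∈ s, (1 : E) ⊗ₜ[F] (c z • z ^ p) := by
          rw [sum_pow_char]
          refine Finset.sum_congr rfl fun z _ ↦ ?_
          rw [TensorProduct.tmul_smul, _root_.smul_pow, ← frobenius_def p (e z), he,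
            algebraMap_smul, Algebra.TensorProduct.tmul_pow, one_pow]
      _ = 0 := by rw [← TensorProduct.tmul_sum, hc, TensorProduct.tmul_zero]
  have hez : e z = 0 := hsE e (pow_eq_zero_iff (NeZero.ne p) |>.1 hpow) z hz
  have := he z
  rwa [hez, map_zero, eq_comm, map_eq_zero_iff _ (FaithfulSMul.algebraMap_injective F E)] at this

theorem exists_isTranscendenceBasis_and_isSeparable_of_isReduced_tensorProduct
    [Algebra.EssFiniteType F L] [IsReduced (AlgebraicClosure F ⊗[F] L)] :
    ∃ s : Finset L, IsTranscendenceBasis F ((↑) : s → L) ∧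
      Algebra.IsSeparable (IntermediateField.adjoin F (s : Set L)) L := by
  obtain _ | ⟨p, hp, _⟩ := CharP.exists' F
  · exact exists_isTranscendenceBasis_and_isSeparable_of_perfectField F L
  · have : CharP (AlgebraicClosure F) p :=
      charP_of_injective_algebraMap (algebraMap F (AlgebraicClosure F)).injective p
    exact exists_isTranscendenceBasis_and_isSeparable_of_linearIndepOn_pow_of_essFiniteType p hp.out
      fun s ↦ linearIndepOn_pow_of_isReduced_tensorProduct (AlgebraicClosure F) p

end SeparableGeneration

section RelationIdeal

universe u

variable {R : Type u} [CommRing R] {L : Type*} [Field L] [Algebra R L] {σ τ : Type*}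

/-- The ideal of `K[Y]` generated by the images of the polynomials over `R` vanishing at the point
`y` of `L`-valued coordinates. As `K` varies it defines the fibres over `R` of the closure of `y`;
for `K` the fraction field of `R`, it is the ideal of all polynomials over `K` vanishing at `y`. -/
def relationIdeal (R K : Type*) [CommRing R] [CommRing K] [Algebra R K] {L : Type*} [CommRing L]
    [Algebra R L] {σ : Type*} (y : σ → L) : Ideal (MvPolynomial σ K) :=
  (RingHom.ker (aeval y : MvPolynomial σ R →ₐ[R] L)).map (map (algebraMap R K))

/-- The fibre of `R[y]` over `K`, as an algebra generated by the images of the coordinates of `y`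
with relations `relationIdeal R K y`. -/
def tensorAdjoinRangeEquiv (R K : Type*) [CommRing R] [CommRing K] [Algebra R K] {L : Type*}
    [CommRing L] [Algebra R L] {σ : Type*} (y : σ → L) :
    K ⊗[R] Algebra.adjoin R (Set.range y) ≃ₐ[K] MvPolynomial σ K ⧸ relationIdeal R K y :=
  (Algebra.TensorProduct.congr .refl (Subalgebra.equivOfEq _ _
    (Algebra.adjoin_range_eq_range_aeval R y))).trans <|
  (tensorEquivQuotientMapKer K (aeval y : MvPolynomial σ R →ₐ[R] L).rangeRestrict_surjective).trans
  <| Ideal.quotientEquivAlgOfEq K (by rw [AlgHom.ker_rangeRestrict, relationIdeal])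

theorem exists_isPrime_relationIdeal_iff [IsDomain R] {F : Type*} [Field F] [Algebra R F]
    [IsFractionRing R F] [Algebra F L] [IsScalarTower R F L] [Finite σ] [Finite τ] {y : σ → L}
    {z : τ → L} (hy : IntermediateField.adjoin F (Set.range y) = ⊤)
    (hz : IntermediateField.adjoin F (Set.range z) = ⊤) :
    ∃ g : R, g ≠ 0 ∧ ∀ (K : Type u) [Field K] [Algebra R K], algebraMap R K g ≠ 0 →
      ((relationIdeal R K y).IsPrime ↔ (relationIdeal R K z).IsPrime) ∧
      ((relationIdeal R K y).IsPrime → ringKrullDim (MvPolynomial σ K ⧸ relationIdeal R K y) =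
        ringKrullDim (MvPolynomial τ K ⧸ relationIdeal R K z)) := by
  have := isFractionRing_adjoin R hy
  have := isFractionRing_adjoin R hz
  obtain ⟨g, hg, h⟩ := GenericFibersAgree.of_subalgebra
    (Subalgebra.fg_def.2 ⟨_, Set.finite_range y, rfl⟩ : (Algebra.adjoin R (Set.range y)).FG)
    (Subalgebra.fg_def.2 ⟨_, Set.finite_range z, rfl⟩ : (Algebra.adjoin R (Set.range z)).FG)
  refine ⟨g, hg, fun K _ _ hgK ↦ ?_⟩
  have hKg := h K hgK
  rwa [(tensorAdjoinRangeEquiv R K y).toMulEquiv.isDomain_iff,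
    (tensorAdjoinRangeEquiv R K z).toMulEquiv.isDomain_iff,
    ringKrullDim_eq_of_ringEquiv (tensorAdjoinRangeEquiv R K y).toRingEquiv,
    ringKrullDim_eq_of_ringEquiv (tensorAdjoinRangeEquiv R K z).toRingEquiv,
    Ideal.Quotient.isDomain_iff_prime, Ideal.Quotient.isDomain_iff_prime] at hKg

section FractionField

variable (F : Type*) [Field F] [Algebra R F] [IsFractionRing R F]

attribute [local instance] algebraMvPolynomial in
theorem relationIdeal_eq_ker_aeval [Algebra F L] [IsScalarTower R F L] (y : σ → L) :
    relationIdeal R F y = RingHom.ker (aeval y : MvPolynomial σ F →ₐ[F] L) := by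
  have hcomap : (RingHom.ker (aeval y : MvPolynomial σ F →ₐ[F] L)).comap (map (algebraMap R F)) =
      RingHom.ker (aeval y : MvPolynomial σ R →ₐ[R] L) := by
    ext q
    simp only [Ideal.mem_comap, RingHom.mem_ker, aeval_map_algebraMap]
  rw [relationIdeal, ← hcomap]
  exact IsLocalization.map_under ((nonZeroDivisors R).map (C (σ := σ))) (MvPolynomial σ F) _

attribute [local instance] algebraMvPolynomial in
theorem isPrime_map_and_comap_map_of_forall_C_mem_eq_zero {I : Ideal (MvPolynomial σ R)}
    [hI : I.IsPrime] (hIR : ∀ c, C c ∈ I → c = 0) :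
    (I.map (map (algebraMap R F))).IsPrime ∧
      (I.map (map (algebraMap R F))).comap (map (algebraMap R F)) = I := by
  have := (algebraMap R F).domain_nontrivial
  have hdisj : Disjoint (((nonZeroDivisors R).map C : Submonoid (MvPolynomial σ R)) : Set _)
      (I : Set (MvPolynomial σ R)) := by
    rw [Set.disjoint_left]
    rintro _ ⟨c, hc, rfl⟩ hcI
    exact nonZeroDivisors.ne_zero hc (hIR c hcI)
  exact ⟨IsLocalization.isPrime_of_isPrime_disjoint _ (MvPolynomial σ F) I hI hdisj,
    IsLocalization.under_map_of_isPrime_disjoint _ (MvPolynomial σ F) hI hdisj⟩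

end FractionField

end RelationIdeal

section IntegralGenerator

variable (R F : Type*) {L : Type*} [CommRing R] [Field F] [Field L] [Algebra R F]
  [Algebra R L] [Algebra F L] [IsScalarTower R F L]

theorem exists_isIntegral_adjoin_insert_eq_top {S : Set L}
    [Algebra.IsAlgebraic (Algebra.adjoin R S) L] {θ : L}
    (hθ : IntermediateField.adjoin F (insert θ S) = ⊤) :
    ∃ θ' : L, IsIntegral (Algebra.adjoin R S) θ' ∧
      IntermediateField.adjoin F (insert θ' S) = ⊤ := by
  obtain ⟨a, ha, hInt⟩ :=
    (Algebra.IsAlgebraic.isAlgebraic (R := Algebra.adjoin R S) θ).exists_integral_multiple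
  refine ⟨a • θ, hInt, ?_⟩
  let M := IntermediateField.adjoin F (insert (a • θ) S)
  have hgen : insert (a • θ) S ⊆ M := IntermediateField.subset_adjoin F _
  have hS : S ⊆ M := (Set.subset_insert _ _).trans hgen
  have haM : (a : L) ∈ M :=
    (Algebra.adjoin_le hS : Algebra.adjoin R S ≤ M.toSubalgebra.restrictScalars R) a.2
  have hθM : θ ∈ M := by
    have ha' : (a : L) ≠ 0 := by simpa using ha
    simpa [Algebra.smul_def, ha'] using div_mem (hgen (Set.mem_insert _ _)) haM
  rw [eq_top_iff, ← hθ]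
  exact IntermediateField.adjoin_le_iff.2 (Set.insert_subset hθM hS)

theorem exists_algebraicIndependent_isIntegral_adjoin_eq_top [IsDomain R] [IsFractionRing R F]
    [Algebra.EssFiniteType F L] [IsReduced (AlgebraicClosure F ⊗[F] L)] :
    ∃ (d : ℕ) (x : Fin d → L) (θ : L), AlgebraicIndependent R x ∧
      IsIntegral (Algebra.adjoin R (Set.range x)) θ ∧
      IntermediateField.adjoin F (Set.range (Fin.cons θ x : Fin (d + 1) → L)) = ⊤ := by
  obtain ⟨s, hs, _⟩ :=
    exists_isTranscendenceBasis_and_isSeparable_of_isReduced_tensorProduct (F := F) (L := L)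
  let E := IntermediateField.adjoin F (s : Set L)
  have : Algebra.EssFiniteType E L := .of_comp F E L
  have := Algebra.finite_of_essFiniteType_of_isAlgebraic (F := E) (E := L)
  obtain ⟨θ, hθ⟩ := Field.exists_primitive_element E L
  let x : Fin s.card → L := (↑) ∘ s.equivFin.symm
  have hrange : Set.range x = s := by
    rw [s.equivFin.symm.surjective.range_comp, Subtype.range_coe]
  have htop : IntermediateField.adjoin F (insert θ (Set.range x)) = ⊤ := by
    rw [hrange, Set.insert_eq, Set.union_comm, ← IntermediateField.adjoin_adjoin_left, hθ,
      IntermediateField.restrictScalars_top]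
  have : Algebra.IsAlgebraic R F := IsLocalization.isAlgebraic F (nonZeroDivisors R)
  have hx : IsTranscendenceBasis R x :=
    (Algebra.IsAlgebraic.isTranscendenceBasis_iff R F).2 (hs.comp_equiv s.equivFin.symm)
  have := hx.isAlgebraic
  obtain ⟨θ', hInt, htop'⟩ := exists_isIntegral_adjoin_insert_eq_top R F htop
  exact ⟨s.card, x, θ', hx.1, hInt, by rwa [Fin.range_cons]⟩

end IntegralGenerator

section Hypersurface

theorem finSuccEquiv_map {R S : Type*} [CommSemiring R] [CommSemiring S] (φ : R →+* S) {n : ℕ}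
    (q : MvPolynomial (Fin (n + 1)) R) :
    finSuccEquiv S n (map φ q) = (finSuccEquiv R n q).map (map φ) := by
  induction q using MvPolynomial.induction_on with
  | C a => simp [finSuccEquiv_apply]
  | add p q hp hq => simp only [map_add, Polynomial.map_add, hp, hq]
  | mul_X p i hp =>
    simp only [map_mul, Polynomial.map_mul, hp, map_X]
    cases i using Fin.cases <;> simp [finSuccEquiv_apply]

theorem aeval_cons_eq_eval₂_finSuccEquiv {R A : Type*} [CommSemiring R] [CommSemiring A]
    [Algebra R A] {n : ℕ} (a : A) (x : Fin n → A) (q : MvPolynomial (Fin (n + 1)) R) :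
    aeval (Fin.cons a x) q =
      (finSuccEquiv R n q).eval₂ (aeval x : MvPolynomial (Fin n) R →ₐ[R] A) a := by
  induction q using MvPolynomial.induction_on with
  | C a => simp [finSuccEquiv_apply]
  | add p q hp hq => rw [map_add, map_add, Polynomial.eval₂_add, hp, hq]
  | mul_X p i hp =>
    rw [map_mul, map_mul, hp, Polynomial.eval₂_mul]
    cases i using Fin.cases <;> simp [finSuccEquiv_apply]

theorem exists_monic_finSuccEquiv_ker_aeval_cons_eq_span {R L : Type*} [CommRing R] [IsDomain R]
    [UniqueFactorizationMonoid R] [CommRing L] [IsDomain L] [Algebra R L] {d : ℕ} {x : Fin d → L}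
    (hx : AlgebraicIndependent R x) {θ : L} (hθ : IsIntegral (Algebra.adjoin R (Set.range x)) θ) :
    ∃ f : MvPolynomial (Fin (d + 1)) R, (finSuccEquiv R d f).Monic ∧
      RingHom.ker (aeval (Fin.cons θ x) : MvPolynomial (Fin (d + 1)) R →ₐ[R] L) =
        Ideal.span {f} := by
  algebraize [(aeval x : MvPolynomial (Fin d) R →ₐ[R] L).toRingHom, hx.aevalEquiv.toRingHom]
  have : IsScalarTower (MvPolynomial (Fin d) R) (Algebra.adjoin R (Set.range x)) L :=
    .of_algebraMap_eq fun p ↦ (hx.algebraMap_aevalEquiv p).symm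
  have := Algebra.isIntegral_of_surjective (R := MvPolynomial (Fin d) R) hx.aevalEquiv.surjective
  have hθ' : IsIntegral (MvPolynomial (Fin d) R) θ := isIntegral_trans θ hθ
  have : FaithfulSMul (MvPolynomial (Fin d) R) L :=
    (faithfulSMul_iff_algebraMap_injective _ _).2 hx
  refine ⟨(finSuccEquiv R d).symm (minpoly (MvPolynomial (Fin d) R) θ), ?_, ?_⟩
  · rw [AlgEquiv.apply_symm_apply]
    exact minpoly.monic hθ'
  · ext q
    rw [RingHom.mem_ker, Ideal.mem_span_singleton, ← map_dvd_iff (finSuccEquiv R d),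
      AlgEquiv.apply_symm_apply, ← minpoly.isIntegrallyClosed_dvd_iff hθ',
      aeval_cons_eq_eval₂_finSuccEquiv]
    rfl

theorem ringKrullDim_quotient_span_of_monic_finSuccEquiv {k : Type*} [Field k] {d : ℕ}
    {f : MvPolynomial (Fin (d + 1)) k} (hmonic : (finSuccEquiv k d f).Monic) (hf : ¬IsUnit f) :
    ringKrullDim (MvPolynomial (Fin (d + 1)) k ⧸ Ideal.span {f}) = d := by
  let e : (MvPolynomial (Fin (d + 1)) k ⧸ Ideal.span {f}) ≃+* AdjoinRoot (finSuccEquiv k d f) :=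
    Ideal.quotientEquiv _ _ (finSuccEquiv k d).toRingEquiv
      (by rw [Ideal.map_span, Set.image_singleton]; rfl)
  have hdeg : 0 < (finSuccEquiv k d f).degree :=
    hmonic.degree_pos_of_not_isUnit fun h ↦ hf ((MulEquiv.isUnit_map (finSuccEquiv k d)).1 h)
  have := hmonic.finite_adjoinRoot
  rw [ringKrullDim_eq_of_ringEquiv e,
    ringKrullDim_eq_of_isIntegral (AdjoinRoot.of.injective_of_degree_ne_zero hdeg.ne'),
    ringKrullDim_of_isNoetherianRing, ringKrullDim_eq_zero_of_field, zero_add, Nat.card_fin]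

end Hypersurface

section Specialization

universe u

variable {R F : Type u} [CommRing R] [IsDomain R] [UniqueFactorizationMonoid R] [Field F]
  [Algebra R F] [IsFractionRing R F] {L : Type*} [Field L] [Algebra F L]
  [IsReduced (AlgebraicClosure F ⊗[F] L)] {σ : Type*} [Finite σ]

theorem exists_irreducible_forall_isPrime_relationIdeal [Algebra R L] [IsScalarTower R F L]
    {y : σ → L} (hy : IntermediateField.adjoin F (Set.range y) = ⊤) :
    ∃ (d : ℕ) (f : MvPolynomial (Fin (d + 1)) R) (g : R), g ≠ 0 ∧
      Irreducible (map (algebraMap R F) f) ∧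
      ∀ (K : Type u) [Field K] [Algebra R K], algebraMap R K g ≠ 0 →
        Irreducible (map (algebraMap R K) f) →
        (relationIdeal R K y).IsPrime ∧
          ringKrullDim (MvPolynomial σ K ⧸ relationIdeal R K y) = d := by
  have : Algebra.EssFiniteType F L := IntermediateField.fg_top_iff.1
    (hy ▸ IntermediateField.fg_adjoin_of_finite (Set.finite_range y))
  obtain ⟨d, x, θ, hx, hθ, htop⟩ :=
    exists_algebraicIndependent_isIntegral_adjoin_eq_top R F (L := L)
  obtain ⟨f, hmonic, hker⟩ := exists_monic_finSuccEquiv_ker_aeval_cons_eq_span hx hθ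
  have hspan (K : Type u) [Field K] [Algebra R K] :
      relationIdeal R K (Fin.cons θ x : Fin (d + 1) → L) = Ideal.span {map (algebraMap R K) f} := by
    rw [relationIdeal, hker, Ideal.map_span, Set.image_singleton]
  have hmonic' (K : Type u) [Field K] [Algebra R K] :
      (finSuccEquiv K d (map (algebraMap R K) f)).Monic := by
    rw [finSuccEquiv_map]
    exact hmonic.map _
  obtain ⟨g, hg, h⟩ := exists_isPrime_relationIdeal_iff (R := R) hy htop
  refine ⟨d, f, g, hg, ?_, fun K _ _ hgK hf ↦ ?_⟩
  · have hprime := RingHom.ker_isPrime (aeval (Fin.cons θ x) : MvPolynomial (Fin (d + 1)) F →ₐ[F] L)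
    have hne : map (algebraMap R F) f ≠ 0 := fun h ↦
      (hmonic' F).ne_zero (by rw [h, map_zero])
    rw [← relationIdeal_eq_ker_aeval (R := R), hspan, Ideal.span_singleton_prime hne] at hprime
    exact hprime.irreducible
  · obtain ⟨hiff, hdim⟩ := h K hgK
    rw [hspan, Ideal.span_singleton_prime hf.ne_zero] at hiff
    have hprime := hiff.2 hf.prime
    refine ⟨hprime, ?_⟩
    rw [hdim hprime, hspan,
      ringKrullDim_quotient_span_of_monic_finSuccEquiv (hmonic' K) hf.not_isUnit]

theorem exists_irreducible_forall_isPrime_map {I : Ideal (MvPolynomial σ R)} [I.IsPrime]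
    (hIR : ∀ c, C c ∈ I → c = 0) [Algebra (MvPolynomial σ F ⧸ I.map (map (algebraMap R F))) L]
    [IsScalarTower F (MvPolynomial σ F ⧸ I.map (map (algebraMap R F))) L]
    [IsFractionRing (MvPolynomial σ F ⧸ I.map (map (algebraMap R F))) L] :
    ∃ (d : ℕ) (f : MvPolynomial (Fin (d + 1)) R) (g : R), g ≠ 0 ∧
      Irreducible (map (algebraMap R F) f) ∧
      ∀ (K : Type u) [Field K] [Algebra R K], algebraMap R K g ≠ 0 →
        Irreducible (map (algebraMap R K) f) →
        (I.map (map (algebraMap R K))).IsPrime ∧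
          ringKrullDim (MvPolynomial σ K ⧸ I.map (map (algebraMap R K))) = d := by
  let J := I.map (map (algebraMap R F) : MvPolynomial σ R →+* MvPolynomial σ F)
  algebraize [(algebraMap F L).comp (algebraMap R F)]
  have : IsScalarTower R F L := .of_algebraMap_eq fun _ ↦ rfl
  let φ : MvPolynomial σ F →ₐ[F] L :=
    (IsScalarTower.toAlgHom F (MvPolynomial σ F ⧸ J) L).comp (Ideal.Quotient.mkₐ F J)
  let y : σ → L := fun i ↦ φ (X i)
  have hφ : aeval y = φ := (aeval_unique φ).symm
  have hkerF : RingHom.ker (aeval y : MvPolynomial σ F →ₐ[F] L) = J := by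
    ext q
    rw [hφ, RingHom.mem_ker, ← Ideal.Quotient.eq_zero_iff_mem]
    exact map_eq_zero_iff _ (IsFractionRing.injective (MvPolynomial σ F ⧸ J) L)
  have hker : RingHom.ker (aeval y : MvPolynomial σ R →ₐ[R] L) = I := by
    rw [← (isPrime_map_and_comap_map_of_forall_C_mem_eq_zero F hIR).2]
    ext q
    rw [RingHom.mem_ker, Ideal.mem_comap, ← aeval_map_algebraMap F, ← RingHom.mem_ker, hkerF]
  have hy : IntermediateField.adjoin F (Set.range y) = ⊤ := by
    refine eq_top_iff.2 fun l _ ↦ (IntermediateField.mem_adjoin_range_iff F y l).2 ?_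
    obtain ⟨p, q, -, rfl⟩ := IsFractionRing.div_surjective (MvPolynomial σ F ⧸ J) l
    obtain ⟨p, rfl⟩ := Ideal.Quotient.mk_surjective p
    obtain ⟨q, rfl⟩ := Ideal.Quotient.mk_surjective q
    exact ⟨p, q, by rw [hφ]; rfl⟩
  have hI (K : Type u) [Field K] [Algebra R K] :
      relationIdeal R K y = I.map (map (algebraMap R K)) := by
    rw [relationIdeal, hker]
  obtain ⟨d, f, g, hg, hf, h⟩ := exists_irreducible_forall_isPrime_relationIdeal (R := R) hy
  refine ⟨d, f, g, hg, hf, fun K _ _ hgK hfK ↦ ?_⟩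
  rw [← hI K]
  exact h K hgK hfK

end Specialization

section HilbertSubset

variable {K : Type} [Field K] {ι : Type} {n : ℕ} {t : ι → K}

theorem PolySpecializesTo.eq_map_eval {f : MvPolynomial (Fin n) (MvPolynomial ι K)}
    {q : MvPolynomial (Fin n) K}
    (h : PolySpecializesTo K t (map (algebraMap _ (RatFuncField K ι)) f) q) :
    q = map (eval t) f := by
  ext m
  obtain ⟨a, b, hb, hba, hq⟩ := h m
  rw [coeff_map, ← map_mul] at hba
  rw [← IsFractionRing.injective _ _ hba, map_mul] at hq
  rw [coeff_map]
  exact mul_left_cancel₀ hb hq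

theorem RatSpecializesTo.eval_ne_zero_of_neg_inv {g : MvPolynomial ι K} (hg : g ≠ 0) {v : K}
    (h : RatSpecializesTo K t (-(algebraMap _ (RatFuncField K ι) g)⁻¹) v) : eval t g ≠ 0 := by
  obtain ⟨a, b, hb, hba, -⟩ := h
  have hg' : algebraMap _ (RatFuncField K ι) g ≠ 0 :=
    (map_ne_zero_iff _ (IsFractionRing.injective _ _)).2 hg
  have hmul : -b = a * g := by
    apply IsFractionRing.injective _ (RatFuncField K ι)
    rw [map_mul, ← hba, map_neg]
    field_simp
  intro hgt
  apply hb
  rw [← neg_eq_zero, ← map_neg, hmul, map_mul, hgt, mul_zero]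

theorem irreducible_X_zero_sub_C {F : Type*} [Field F] (a : F) :
    Irreducible (X 0 - C a : MvPolynomial (Fin (n + 1)) F) := by
  have hlin : finSuccEquiv F n (X 0 - C a) = Polynomial.X - Polynomial.C (C a) := by
    rw [map_sub, finSuccEquiv_X_zero, ← algebraMap_eq, AlgEquiv.commutes]
    rfl
  rw [← MulEquiv.irreducible_iff (finSuccEquiv F n), hlin]
  exact (Polynomial.prime_X_sub_C _).irreducible

theorem exists_isHilbertSubset_irreducible_map_eval
    {f : MvPolynomial (Fin (n + 1)) (MvPolynomial ι K)} {g : MvPolynomial ι K}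
    (hf : Irreducible (map (algebraMap _ (RatFuncField K ι)) f)) (hg : g ≠ 0) :
    ∃ H : Set (ι → K), IsHilbertSubset K ι H ∧
      ∀ t ∈ H, eval t g ≠ 0 ∧ Irreducible (map (eval t) f) := by
  -- Over a finite field `g ≠ 0` may vanish on all of `K^ι`, so `g(t) ≠ 0` need not be a nonempty
  -- open condition; it is enforced instead by requiring `Y₀ - 1 / g` to specialize.
  refine ⟨_, ⟨n + 1, 2, 1, ![map (algebraMap _ _) f, X 0 - C (algebraMap _ _ g)⁻¹], ![1],
    Fin.forall_fin_two.2 ⟨hf, irreducible_X_zero_sub_C _⟩, ⟨0, 0, by simp⟩, rfl⟩, ?_⟩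
  rintro t ⟨-, ht⟩
  obtain ⟨⟨q, hq, hqirr⟩, ⟨q', hq', -⟩⟩ := Fin.forall_fin_two.1 ht
  have hconst := hq' 0
  simp only [Matrix.cons_val_one, Matrix.cons_val_fin_one, coeff_sub, coeff_zero_X, coeff_zero_C,
    zero_sub] at hconst
  exact ⟨hconst.eval_ne_zero_of_neg_inv hg, PolySpecializesTo.eq_map_eval hq ▸ hqirr⟩

end HilbertSubset

theorem isSepOverBase_iff_isReduced {F A : Type} [Field F] [CommRing A] [Algebra F A] :
    IsSepOverBase F A ↔ IsReduced (AlgebraicClosure F ⊗[F] FractionRing A) := by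
  have halg : ((algebraMap A (FractionRing A)).comp (algebraMap F A)).toAlgebra =
      (inferInstance : Algebra F (FractionRing A)) :=
    Algebra.algebra_ext _ _ fun _ ↦ (IsScalarTower.algebraMap_apply F A _ _).symm
  rw [IsSepOverBase, IsSepExtOfHom, halg]

section LeftCoefficients

/-- The isomorphism `K[T, Y] ≃ K[T][Y]` making the variables `T = (T_i)_{i ∈ σ}` coefficients. -/
def sumLeftCoeffEquiv (K σ τ : Type*) [CommSemiring K] :
    MvPolynomial (σ ⊕ τ) K ≃ₐ[K] MvPolynomial τ (MvPolynomial σ K) :=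
  (renameEquiv K (Equiv.sumComm σ τ)).trans (sumAlgEquiv K τ σ)

theorem C_mem_map_sumLeftCoeffEquiv {K σ τ : Type*} [CommSemiring K]
    {I : Ideal (MvPolynomial (σ ⊕ τ) K)} {c : MvPolynomial σ K} :
    C c ∈ I.map (sumLeftCoeffEquiv K σ τ) ↔ rename Sum.inl c ∈ I := by
  have hC : sumLeftCoeffEquiv K σ τ (rename Sum.inl c) = C c := by
    induction c using MvPolynomial.induction_on <;> simp_all [sumLeftCoeffEquiv]
  rw [← hC, ← Ideal.mem_comap, Ideal.comap_map_of_bijective _ (sumLeftCoeffEquiv K σ τ).bijective]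

variable {K : Type} [Field K] {r s : ℕ}

theorem map_algebraMap_sumLeftCoeffEquiv (p : MvPolynomial (Fin r ⊕ Fin s) K) :
    map (algebraMap _ (RatFuncField K (Fin r))) (sumLeftCoeffEquiv K _ _ p) = extHom K r s p := by
  induction p using MvPolynomial.induction_on with
  | C c => simp [sumLeftCoeffEquiv, extHom]
  | add p q hp hq => simp only [map_add, hp, hq]
  | mul_X p i hp => rcases i with i | j <;> simp_all [sumLeftCoeffEquiv, extHom]

theorem map_eval_sumLeftCoeffEquiv (t : Fin r → K) (p : MvPolynomial (Fin r ⊕ Fin s) K) :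
    map (eval t) (sumLeftCoeffEquiv K _ _ p) = specHom K t p := by
  induction p using MvPolynomial.induction_on with
  | C c => simp [sumLeftCoeffEquiv, specHom]
  | add p q hp hq => simp only [map_add, hp, hq]
  | mul_X p i hp => rcases i with i | j <;> simp_all [sumLeftCoeffEquiv, specHom]

theorem span_range_extHom {κ : Type*} (P : κ → MvPolynomial (Fin r ⊕ Fin s) K) :
    Ideal.span (Set.range fun i ↦ extHom K r s (P i)) =
      ((Ideal.span (Set.range P)).map (sumLeftCoeffEquiv K (Fin r) (Fin s))).map
        (map (algebraMap _ (RatFuncField K (Fin r)))) := by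
  simp_rw [Ideal.map_span, ← Set.range_comp, ← map_algebraMap_sumLeftCoeffEquiv]
  rfl

theorem span_range_specHom {κ : Type*} (t : Fin r → K)
    (P : κ → MvPolynomial (Fin r ⊕ Fin s) K) :
    Ideal.span (Set.range fun i ↦ specHom K t (P i)) =
      ((Ideal.span (Set.range P)).map (sumLeftCoeffEquiv K (Fin r) (Fin s))).map
        (map (eval t)) := by
  simp_rw [Ideal.map_span, ← Set.range_comp, ← map_eval_sumLeftCoeffEquiv]
  rfl

end LeftCoefficients

/-- If `p_T = ⟨P_1,…,P_l⟩ ⊆ K[T,Y]` is prime, `p_T ∩ K[T] = 0`, and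
`Frac(K[T,Y]/p_T) = Frac(K(T)[Y]/p̃_T)` is a separable extension of `K(T)`, with
`d = dim K(T)[Y]/p̃_T`, then there is a Hilbert subset `H ⊆ K^r` such that for all `t ∈ H`
the specialized ideal `p_t ⊆ K[Y]` is prime and `K[Y]/p_t` is an integral domain of Krull
dimension `d`. -/
theorem stmt_1 (K : Type) [Field K] (r s l : ℕ)
    (P : Fin l → MvPolynomial (Fin r ⊕ Fin s) K)
    (hprime : (Ideal.span (Set.range P)).IsPrime)
    (hcap : ∀ g : MvPolynomial (Fin r) K,
      MvPolynomial.rename Sum.inl g ∈ Ideal.span (Set.range P) → g = 0)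
    (hsep : IsSepOverBase (RatFuncField K (Fin r))
      (MvPolynomial (Fin s) (RatFuncField K (Fin r)) ⧸
        Ideal.span (Set.range fun i => extHom K r s (P i))))
    (d : WithBot ℕ∞)
    (hd : ringKrullDim (MvPolynomial (Fin s) (RatFuncField K (Fin r)) ⧸
        Ideal.span (Set.range fun i => extHom K r s (P i))) = d) :
    ∃ H : Set (Fin r → K), IsHilbertSubset K (Fin r) H ∧ ∀ t ∈ H,
      (Ideal.span (Set.range fun i => specHom K t (P i))).IsPrime ∧
      IsDomain (MvPolynomial (Fin s) K ⧸
        Ideal.span (Set.range fun i => specHom K t (P i))) ∧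
      ringKrullDim (MvPolynomial (Fin s) K ⧸
        Ideal.span (Set.range fun i => specHom K t (P i))) = d := by
  let I := (Ideal.span (Set.range P)).map (sumLeftCoeffEquiv K (Fin r) (Fin s))
  let F := RatFuncField K (Fin r)
  have hI : I.IsPrime := Ideal.map_isPrime_of_equiv _
  have hIR : ∀ c, C c ∈ I → c = 0 := fun c hc ↦ hcap c (C_mem_map_sumLeftCoeffEquiv.1 hc)
  rw [span_range_extHom] at hsep hd
  let J := I.map (map (algebraMap _ F))
  have hJ : J.IsPrime := (isPrime_map_and_comap_map_of_forall_C_mem_eq_zero F hIR).1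
  have : IsReduced (AlgebraicClosure F ⊗[F] FractionRing (MvPolynomial (Fin s) F ⧸ J)) :=
    isSepOverBase_iff_isReduced.1 hsep
  obtain ⟨n, f, g, hg, hf, hfg⟩ := exists_irreducible_forall_isPrime_map
    (F := F) (L := FractionRing (MvPolynomial (Fin s) F ⧸ J)) hIR
  obtain ⟨H, hH, hHfg⟩ := exists_isHilbertSubset_irreducible_map_eval hf hg
  have hdn : n = d :=
    (hfg F ((map_ne_zero_iff _ (IsFractionRing.injective _ F)).2 hg) hf).2.symm.trans hd
  refine ⟨H, hH, fun t ht ↦ ?_⟩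
  let := (eval t).toAlgebra
  obtain ⟨hprime_t, hdim_t⟩ := hfg K (hHfg t ht).1 (hHfg t ht).2
  rw [span_range_specHom]
  exact ⟨hprime_t, Ideal.Quotient.isDomain _, hdim_t.trans hdn⟩

end
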